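/- Let a be an irrational real number. Then for every point p of the 2-torus (ℝ/ℤ)², the set {p + π(s, a·s) : s ∈ ℝ} is dense in (ℝ/ℤ)², where π : ℝ² → (ℝ/ℤ)² is the canonical projection; i.e. every orbit of the linear flow of slope a on the 2-torus is dense. -/

import Mathlib

/-!
The orbit through the origin projects onto the first circle, and it meets the fibre over `0` at the
times `s ∈ ℤp`, hence in the orbit of the rotation by `a * p` of a circle of circumference `q`. That
orbit is dense when `a * p / q` is irrational, and the flow carries it to a dense subset of every
other fibre. The remaining orbits of the flow are translates of this one.
-/

theorem denseRange_addMonoidHom_prod_of_dense_image_ker {M G H : Type*}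
    [AddGroup M] [AddGroup G] [AddGroup H] [TopologicalSpace G] [TopologicalSpace H]
    [ContinuousConstVAdd H H] {f : M →+ G} {g : M →+ H} (hf : DenseRange f)
    (hg : Dense (g '' f.ker)) : DenseRange (f.prod g) := by
  suffices h : Set.range f ×ˢ Set.univ ⊆ closure (Set.range (f.prod g)) from
    (hf.prod dense_univ).mono h |>.of_closure
  rintro ⟨_, y⟩ ⟨⟨t, rfl⟩, -⟩
  have hcont : Continuous fun z : H ↦ (f t, g t + z) :=
    continuous_const.prodMk (continuous_const_vadd (g t))
  have hfiber : Set.MapsTo (fun z ↦ (f t, g t + z)) (g '' f.ker) (Set.range (f.prod g)) := by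
    rintro _ ⟨k, hk, rfl⟩
    exact ⟨t + k, by simp [f.mem_ker.1 hk]⟩
  simpa using map_mem_closure hcont (hg (-g t + y)) hfiber

theorem dense_coe_mul_image_zmultiples {p q a : ℝ} (ha : Irrational (a * p / q)) :
    Dense ((fun s : ℝ ↦ ((a * s : ℝ) : AddCircle q)) '' AddSubgroup.zmultiples p) := by
  rw [← AddCircle.denseRange_zsmul_coe_iff] at ha
  refine ha.mono ?_
  rintro _ ⟨n, rfl⟩
  exact ⟨n • p, ⟨n, rfl⟩, by simp [← AddCircle.coe_zsmul, mul_left_comm]⟩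

/-- The linear flow of slope `a` through the origin of the torus with circumferences `p` and `q`,
as a one-parameter subgroup. -/
noncomputable def linearFlow (p q a : ℝ) : ℝ →+ AddCircle p × AddCircle q :=
  (QuotientAddGroup.mk' (AddSubgroup.zmultiples p)).prod
    ((QuotientAddGroup.mk' (AddSubgroup.zmultiples q)).comp (AddMonoidHom.mulLeft a))

theorem denseRange_linearFlow {p q a : ℝ} (ha : Irrational (a * p / q)) :
    DenseRange (linearFlow p q a) := by
  refine denseRange_addMonoidHom_prod_of_dense_image_ker
    (QuotientAddGroup.mk'_surjective _).denseRange ?_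
  rw [QuotientAddGroup.ker_mk']
  exact dense_coe_mul_image_zmultiples ha

theorem stmt6_general {p q a : ℝ} (ha : Irrational (a * p / q)) (x : AddCircle p × AddCircle q) :
    Dense {y : AddCircle p × AddCircle q |
      ∃ s : ℝ, y = x + ((s : AddCircle p), ((a * s : ℝ) : AddCircle q))} := by
  have horbit : DenseRange fun s ↦ x + linearFlow p q a s :=
    (Homeomorph.addLeft x).surjective.denseRange.comp (denseRange_linearFlow ha)
      (Homeomorph.addLeft x).continuous
  refine horbit.mono ?_
  rintro _ ⟨s, rfl⟩
  exact ⟨s, rfl⟩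

/-- Let `a` be irrational. Then for every point `p` of the 2-torus
`(ℝ/ℤ)²`, the orbit `{p + π(s, a·s) : s ∈ ℝ}` of the linear flow of slope `a` is dense
in `(ℝ/ℤ)²`, where `π : ℝ² → (ℝ/ℤ)²` is the canonical projection. -/
theorem stmt6 (a : ℝ) (ha : Irrational a)
    (p : AddCircle (1 : ℝ) × AddCircle (1 : ℝ)) :
    Dense {q : AddCircle (1 : ℝ) × AddCircle (1 : ℝ) |
      ∃ s : ℝ, q = p + (((s : ℝ) : AddCircle (1 : ℝ)), ((a * s : ℝ) : AddCircle (1 : ℝ)))} :=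
  stmt6_general (by simpa using ha) p
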